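/- Let χ₋₄ denote the nontrivial Dirichlet character modulo 4 and L(s, χ₋₄) its Dirichlet L-function. For every δ > 0 there exist c > 0 and T₀ > 0 such that for all T ≥ T₀, the set {s ∈ ℂ : 3 < Re(s) < 3 + δ, Im(s) ∈ [0,T], ζ(s) L(s − 2, χ₋₄) − 4 ζ(s − 2) L(s, χ₋₄) = 0} contains at least cT elements; in particular the Epstein zeta function ζ(s; I₆) = −4(ζ(s) L(s−2, χ₋₄) − 4 ζ(s−2) L(s, χ₋₄)) has infinitely many zeros in the half-plane Re(s) > 3. -/

import Mathlib

open Complex Filter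

/-- The set `S` contains at least `x` elements. -/
def AtLeastCard (S : Set ℂ) (x : ℝ) : Prop :=
  ∃ F : Finset ℂ, ↑F ⊆ S ∧ x ≤ (F.card : ℝ)

open Set
open scoped Topology

/-!
For a character `g` of the monoid `ℕ+`, let
`D(g, s) = L(s + κ, g) L(s, gχ) - c L(s, g) L(s + κ, gχ)`. The characters `n ↦ n ^ (-it)` turn `D`
into the vertical translates of the combination `ζ(s) L(s - κ, χ) - c ζ(s - κ) L(s, χ)`, and by
Kronecker's theorem they are dense in the compact group of all characters. By Hurwitz's theorem and
compactness, a single zero of `D(g, ·)` in `1 < Re s < 1 + δ`, for a single `g`, thus produces zeros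
of the combination at heights with bounded gaps.

To find such a zero, note that `D(1, σ)` is negative as `σ → 1⁺`, because of the pole of `ζ`. Let
`g` be `1` at the primes `p ≤ M` and `χ p` at the primes `p > M`: now `L(s, gχ)` has the pole, so
`D(g, σ)` is positive as `σ → 1⁺`. For large `M` this `g` is close to `1`, so `D(g, ·)` is still
negative at some fixed point near `1`, and changes sign before it.
-/

section Kronecker

open MeasureTheory
open scoped Pointwise

lemma integral_eq_zero_of_apply_ne_one {K : Type*} [Group K] [MeasurableSpace K] [MeasurableMul K]
    (μ : Measure K) [μ.IsMulLeftInvariant] (γ : K →* Circle) {g : K} (hg : γ g ≠ 1) :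
    ∫ x, (γ x : ℂ) ∂μ = 0 := by
  have h_mul : (γ g : ℂ) * ∫ x, (γ x : ℂ) ∂μ = ∫ x, (γ x : ℂ) ∂μ := by
    rw [← integral_const_mul, ← integral_mul_left_eq_self (fun x ↦ (γ x : ℂ)) g]
    simp only [map_mul, Circle.coe_mul]
  exact (mul_left_eq_self₀.mp h_mul).resolve_left fun h ↦ hg (Circle.ext h)

lemma continuous_integral_continuousMap {X : Type*} [TopologicalSpace X] [CompactSpace X]
    [MeasurableSpace X] [BorelSpace X] (μ : Measure X) [IsFiniteMeasure μ] :
    Continuous fun f : C(X, ℂ) ↦ ∫ x, f x ∂μ := by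
  have h_toLp (f : C(X, ℂ)) : ∫ x, f x ∂μ = ∫ x, ContinuousMap.toLp 1 μ ℂ f x ∂μ :=
    integral_congr_ae (ContinuousMap.coeFn_toLp (p := 1) (𝕜 := ℂ) μ f).symm
  simpa only [h_toLp] using! continuous_integral.comp (ContinuousMap.toLp 1 μ ℂ).continuous

variable {G : Type*} [Group G] [TopologicalSpace G]

/-- A continuous character of `G`, regarded as a complex-valued continuous function. -/
noncomputable def characterMap (γ : G →ₜ* Circle) : C(G, ℂ) := ⟨fun x ↦ γ x, by fun_prop⟩

variable [CompactSpace G]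

lemma dense_span_characterMap (Γ : Subgroup (G →ₜ* Circle))
    (hΓ : ∀ x y : G, (∀ γ ∈ Γ, γ x = γ y) → x = y) :
    Dense (Submodule.span ℂ (characterMap '' (Γ : Set (G →ₜ* Circle))) : Set C(G, ℂ)) := by
  let 𝒜 : StarSubalgebra ℂ C(G, ℂ) :=
    { toSubalgebra := Algebra.adjoin ℂ (characterMap '' Γ)
      star_mem' := by
        change Algebra.adjoin ℂ _ ≤ star (Algebra.adjoin ℂ _)
        refine Algebra.adjoin_le ?_
        rintro _ ⟨γ, hγ, rfl⟩
        refine Algebra.subset_adjoin ⟨γ⁻¹, inv_mem hγ, ?_⟩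
        ext x
        exact Circle.coe_inv_eq_conj _ }
  have h_span : Subalgebra.toSubmodule 𝒜.toSubalgebra = Submodule.span ℂ (characterMap '' Γ) := by
    refine Algebra.adjoin_eq_span_of_subset ℂ (.trans (fun f hf ↦ ?_) Submodule.subset_span)
    induction hf using Submonoid.closure_induction with
    | mem _ hf => exact hf
    | one => exact ⟨1, one_mem Γ, by ext; rfl⟩
    | mul _ _ _ _ hf hg =>
      obtain ⟨γ, hγ, rfl⟩ := hf
      obtain ⟨γ', hγ', rfl⟩ := hg
      exact ⟨γ * γ', mul_mem hγ hγ', by ext; rfl⟩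
  have h_sep : 𝒜.SeparatesPoints := fun x y hxy ↦ by
    by_contra! h
    refine hxy (hΓ x y fun γ hγ ↦ Circle.ext (h _ ⟨characterMap γ, ?_, rfl⟩))
    exact Algebra.subset_adjoin ⟨γ, hγ, rfl⟩
  rw [← h_span, dense_iff_closure_eq]
  exact congrArg SetLike.coe
    (ContinuousMap.starSubalgebra_topologicalClosure_eq_top_of_separatesPoints 𝒜 h_sep)

variable [IsTopologicalGroup G]

lemma integral_comp_mul_left_eq_integral {Γ : Subgroup (G →ₜ* Circle)}
    (hΓ : ∀ x y : G, (∀ γ ∈ Γ, γ x = γ y) → x = y) {K : Subgroup G}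
    (hK : ∀ γ ∈ Γ, (∀ k ∈ K, γ k = 1) → γ = 1) [CompactSpace K] [MeasurableSpace K] [BorelSpace K]
    (μ : Measure K) [IsFiniteMeasure μ] [μ.IsMulLeftInvariant] (θ : G) (f : C(G, ℂ)) :
    ∫ k : K, f (θ * k) ∂μ = ∫ k : K, f k ∂μ := by
  let translate : C(K, G) := ⟨fun k ↦ θ * k, by fun_prop⟩
  let incl : C(K, G) := ⟨fun k ↦ k, by fun_prop⟩
  have h_cont (φ : C(K, G)) : Continuous fun f : C(G, ℂ) ↦ ∫ k, f (φ k) ∂μ :=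
    (continuous_integral_continuousMap μ).comp (ContinuousMap.continuous_precomp φ)
  have h_int (φ : C(K, G)) (f : C(G, ℂ)) : Integrable (fun k ↦ f (φ k)) μ :=
    (f.comp φ).continuous.integrable_of_hasCompactSupport (.of_compactSpace _)
  refine congrFun (Continuous.ext_on (dense_span_characterMap Γ hΓ) (h_cont translate) (h_cont incl)
    fun f hf ↦ ?_) f
  induction hf using Submodule.span_induction with
  | zero => simp
  | add f g _ _ hf hg =>
    simp only [ContinuousMap.add_apply]
    rw [integral_add (h_int _ f) (h_int _ g), integral_add (h_int _ f) (h_int _ g), hf, hg]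
  | smul a f _ hf => simp only [ContinuousMap.smul_apply, integral_smul, hf]
  | mem f hf =>
    obtain ⟨γ, hγ, rfl⟩ := hf
    by_cases h : ∀ k ∈ K, γ k = 1
    · simp [characterMap, hK γ hγ h]
    · push Not at h
      obtain ⟨k₀, hk₀, hγk₀⟩ := h
      have h_zero : ∫ k : K, (γ k : ℂ) ∂μ = 0 :=
        integral_eq_zero_of_apply_ne_one μ ((γ : G →* Circle).comp K.subtype) (g := ⟨k₀, hk₀⟩) hγk₀
      simp [characterMap, translate, incl, integral_const_mul, h_zero]

theorem dense_of_forall_character {Γ : Subgroup (G →ₜ* Circle)}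
    (hΓ : ∀ x y : G, (∀ γ ∈ Γ, γ x = γ y) → x = y) {H : Subgroup G}
    (hH : ∀ γ ∈ Γ, (∀ h ∈ H, γ h = 1) → γ = 1) : Dense (H : Set G) := by
  set K := H.topologicalClosure
  have hK_closed : IsClosed (K : Set G) := H.isClosed_topologicalClosure
  have : CompactSpace K := isCompact_iff_compactSpace.mp hK_closed.isCompact
  let : MeasurableSpace K := borel K
  have : BorelSpace K := ⟨rfl⟩
  let μ : Measure K := Measure.haar
  by_contra h_dense
  obtain ⟨θ, hθ⟩ : ∃ θ, θ ∉ K := by simpa [Dense] using! h_dense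
  have h_disj : Disjoint (K : Set G) (θ • (K : Set G)) := by
    refine disjoint_left.mpr ?_
    rintro _ hx ⟨k, hk, rfl⟩
    exact hθ ((K.mul_mem_cancel_right hk).mp hx)
  obtain ⟨f, hf₀, hf₁, -⟩ :=
    exists_continuous_zero_one_of_isClosed hK_closed (hK_closed.smul θ) h_disj
  -- Translation by `θ` preserves integrals over `K`, yet `f` is `0` on `K` and `1` on `θ • K`.
  have h_eq := integral_comp_mul_left_eq_integral hΓ
    (fun γ hγ h ↦ hH γ hγ fun x hx ↦ h x (H.le_topologicalClosure hx)) μ θ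
    ⟨fun x ↦ (f x : ℂ), by fun_prop⟩
  have h₀ (k : K) : f k = 0 := hf₀ k.2
  have h₁ (k : K) : f (θ * k) = 1 := hf₁ (smul_mem_smul_set k.2)
  simp [h₀, h₁, measureReal_univ_ne_zero (μ := μ)] at h_eq

end Kronecker

section CharacterGroup

variable {A : Type*} [CommMonoid A] [TopologicalSpace A]

/-- Evaluation at an element of `A`, as a character of the group of characters of `A`. -/
noncomputable def evalCharacter : A →* ((A →ₜ* Circle) →ₜ* Circle) where
  toFun a :=
    { toFun := fun ψ ↦ ψ a
      map_one' := rfl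
      map_mul' := fun _ _ ↦ rfl
      continuous_toFun := by fun_prop }
  map_one' := by ext ψ; exact congrArg _ (map_one ψ)
  map_mul' a b := by ext ψ; exact congrArg _ (map_mul ψ a b)

lemma exists_mul_evalCharacter_eq {γ : (A →ₜ* Circle) →ₜ* Circle}
    (hγ : γ ∈ Subgroup.closure (range evalCharacter)) :
    ∃ a b : A, γ * evalCharacter b = evalCharacter a := by
  induction hγ using Subgroup.closure_induction with
  | mem γ hγ =>
    obtain ⟨a, rfl⟩ := hγ
    exact ⟨a, 1, by simp⟩
  | one => exact ⟨1, 1, by simp⟩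
  | mul γ γ' _ _ h h' =>
    obtain ⟨a, b, h⟩ := h
    obtain ⟨a', b', h'⟩ := h'
    exact ⟨a * a', b * b', by rw [map_mul, map_mul, mul_mul_mul_comm, h, h']⟩
  | inv γ _ h =>
    obtain ⟨a, b, h⟩ := h
    exact ⟨b, a, by rw [← h, inv_mul_cancel_left]⟩

theorem dense_of_forall_eq_imp_eq [DiscreteTopology A] {H : Subgroup (A →ₜ* Circle)}
    (hH : ∀ a b : A, (∀ ψ ∈ H, ψ a = ψ b) → a = b) : Dense (H : Set (A →ₜ* Circle)) := by
  refine dense_of_forall_character (Γ := Subgroup.closure (range evalCharacter)) ?_ ?_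
  · exact fun ψ ψ' h ↦
      ContinuousMonoidHom.ext fun a ↦ h (evalCharacter a) (Subgroup.subset_closure ⟨a, rfl⟩)
  · intro γ hγ h
    obtain ⟨a, b, hab⟩ := exists_mul_evalCharacter_eq hγ
    obtain rfl : a = b := hH a b fun ψ hψ ↦ by
      simpa [h ψ hψ] using! congr($hab.symm ψ)
    exact mul_eq_right.mp hab

end CharacterGroup

section Recurrence

lemma exists_forall_exists_abs_sub_le_mem {G : Type*} [Group G] [TopologicalSpace G]
    [CompactSpace G] [ContinuousMul G] {φ : Multiplicative ℝ →* G} (hφ : DenseRange φ) {V : Set G}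
    (hV : IsOpen V) (hV_ne : V.Nonempty) :
    ∃ R : ℝ, ∀ x : ℝ, ∃ t : ℝ, |t - x| ≤ R ∧ φ (.ofAdd t) ∈ V := by
  have h_open (t : ℝ) : IsOpen {g | φ (.ofAdd t) * g ∈ V} := hV.preimage (continuous_const_mul _)
  have h_cover : (univ : Set G) ⊆ ⋃ t : ℝ, {g | φ (.ofAdd t) * g ∈ V} := fun g _ ↦ by
    obtain ⟨v, hv⟩ := hV_ne
    obtain ⟨t, ht⟩ := hφ.exists_mem_open (hV.preimage (continuous_mul_const g))
      ⟨v * g⁻¹, by simpa using hv⟩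
    exact mem_iUnion.mpr ⟨t.toAdd, ht⟩
  obtain ⟨S, hS⟩ := isCompact_univ.elim_finite_subcover _ h_open h_cover
  obtain ⟨R, hR⟩ := S.finite_toSet.isCompact.isBounded.exists_norm_le
  refine ⟨R, fun x ↦ ?_⟩
  obtain ⟨t, ht, hxt⟩ := mem_iUnion₂.mp (hS (mem_univ (φ (.ofAdd x))))
  exact ⟨t + x, by simpa using hR t ht, by simpa [ofAdd_add] using! hxt⟩

end Recurrence

section Hurwitz

lemma exists_mem_closure_eq_zero {U : Set ℂ} (hU : Bornology.IsBounded U) {g : ℂ → ℂ}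
    (hg : DiffContOnCl ℂ g U) {z : ℂ} (hz : z ∈ closure U) {m : ℝ} (hgz : ‖g z‖ < m)
    (hgU : ∀ w ∈ frontier U, m ≤ ‖g w‖) : ∃ w ∈ closure U, g w = 0 := by
  by_contra! hne
  have hm : 0 < m := (norm_nonneg _).trans_lt hgz
  have h_inv : ‖(g z)⁻¹‖ ≤ m⁻¹ := norm_le_of_forall_mem_frontier_norm_le hU (hg.inv hne)
    (fun w hw ↦ by simpa using inv_anti₀ hm (hgU w hw)) hz
  rw [norm_inv, inv_le_inv₀ (norm_pos_iff.mpr (hne z hz)) hm] at h_inv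
  exact hgz.not_ge h_inv

lemma exists_closedBall_subset_forall_sphere_lt_norm {g : ℂ → ℂ} {z₀ : ℂ} {W : Set ℂ}
    (hW : W ∈ 𝓝 z₀) (hg : DifferentiableOn ℂ g W) (h_ne : ∃ᶠ z in 𝓝 z₀, g z ≠ 0) :
    ∃ r > 0, Metric.closedBall z₀ r ⊆ W ∧ ∃ m > 0, ∀ z ∈ Metric.sphere z₀ r, m < ‖g z‖ := by
  have h_isolated : ∀ᶠ z in 𝓝[≠] z₀, g z ≠ 0 :=
    (hg.analyticAt hW).eventually_eq_zero_or_eventually_ne_zero.resolve_left (by simpa using! h_ne)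
  obtain ⟨r, hr, h_ball⟩ := Metric.nhds_basis_closedBall.mem_iff.mp
    (inter_mem hW (eventually_nhdsWithin_iff.mp h_isolated))
  have h_sphere : ∀ z ∈ Metric.sphere z₀ r, 0 < ‖g z‖ := fun z hz ↦ norm_pos_iff.mpr <|
    (h_ball (Metric.sphere_subset_closedBall hz)).2 (Metric.ne_of_mem_sphere hz hr.ne')
  have hrW : Metric.closedBall z₀ r ⊆ W := fun z hz ↦ (h_ball hz).1
  obtain ⟨m', hm', hle⟩ := (isCompact_sphere z₀ r).exists_forall_le'
    (hg.continuousOn.mono (Metric.sphere_subset_closedBall.trans hrW)).norm h_sphere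
  obtain ⟨m, hm, hmm'⟩ := exists_between hm'
  exact ⟨r, hr, hrW, m, hm, fun z hz ↦ hmm'.trans_le (hle z hz)⟩

theorem eventually_exists_mem_eq_zero {X : Type*} [TopologicalSpace X] {F : X → ℂ → ℂ} {U : Set ℂ}
    (hU : IsOpen U) (hF_cont : ContinuousOn (Function.uncurry F) (univ ×ˢ U))
    (hF : ∀ x, DifferentiableOn ℂ (F x) U) {x₀ : X} {z₀ : ℂ} (hz₀ : z₀ ∈ U) (h_zero : F x₀ z₀ = 0)
    (h_ne : ∃ᶠ z in 𝓝 z₀, F x₀ z ≠ 0) {V : Set ℂ} (hV : V ∈ 𝓝 z₀) :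
    ∀ᶠ x in 𝓝 x₀, ∃ z ∈ V, F x z = 0 := by
  obtain ⟨r, hr, h_ball, m, hm, h_sphere⟩ := exists_closedBall_subset_forall_sphere_lt_norm
    (inter_mem (hU.mem_nhds hz₀) hV) ((hF x₀).mono inter_subset_left) h_ne
  have h_at {z : ℂ} (hz : z ∈ Metric.closedBall z₀ r) :
      ContinuousAt (Function.uncurry F) (x₀, z) :=
    hF_cont.continuousAt (prod_mem_nhds univ_mem (hU.mem_nhds (h_ball hz).1))
  have h_center : ∀ᶠ x in 𝓝 x₀, ‖F x z₀‖ < m :=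
    ((h_at (Metric.mem_closedBall_self hr.le)).comp (f := fun x ↦ (x, z₀))
      (by fun_prop)).norm.eventually_lt_const (by simpa [h_zero] using hm)
  have h_far : ∀ᶠ x in 𝓝 x₀, ∀ z ∈ Metric.sphere z₀ r, m < ‖F x z‖ :=
    (isCompact_sphere z₀ r).eventually_forall_of_forall_eventually fun z hz ↦
      (h_at (Metric.sphere_subset_closedBall hz)).norm.eventually_const_lt (h_sphere z hz)
  filter_upwards [h_center, h_far] with x hx_center hx_far
  obtain ⟨w, hw, hFw⟩ := exists_mem_closure_eq_zero Metric.isBounded_ball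
    (((hF x).mono fun z hz ↦ (h_ball hz).1).diffContOnCl_ball subset_rfl)
    (subset_closure (Metric.mem_ball_self hr)) hx_center
    fun w hw ↦ (hx_far w (Metric.frontier_ball_subset_sphere hw)).le
  exact ⟨w, (h_ball (Metric.closure_ball_subset_closedBall hw)).2, hFw⟩

end Hurwitz

section BoundedCoefficients

lemma differentiableOn_LSeries_of_norm_le {a : ℕ → ℂ} {C : ℝ} (ha : ∀ n, ‖a n‖ ≤ C) :
    DifferentiableOn ℂ (LSeries a) {s | 1 < s.re} :=
  (LSeries_differentiableOn a).mono fun _ hs ↦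
    (LSeries.abscissaOfAbsConv_le_of_le_const ⟨C, fun n _ ↦ ha n⟩).trans_lt (mod_cast hs)

lemma continuousOn_uncurry_LSeries {X : Type*} [TopologicalSpace X] {a : X → ℕ → ℂ}
    (ha : ∀ n, Continuous fun x ↦ a x n) {C : ℝ} (hC : ∀ x n, ‖a x n‖ ≤ C) :
    ContinuousOn (fun p : X × ℂ ↦ LSeries (a p.1) p.2) (univ ×ˢ {s | 1 < s.re}) := by
  rintro ⟨x₀, s₀⟩ ⟨-, hs₀⟩
  obtain ⟨σ, hσ, hσs₀⟩ := exists_between (α := ℝ) hs₀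
  have h_nhds : (univ ×ˢ {s : ℂ | σ < s.re} : Set (X × ℂ)) ∈ 𝓝 (x₀, s₀) :=
    prod_mem_nhds univ_mem ((isOpen_lt continuous_const continuous_re).mem_nhds hσs₀)
  refine ContinuousAt.continuousWithinAt (ContinuousOn.continuousAt ?_ h_nhds)
  have hC' : LSeriesSummable (fun _ ↦ (C : ℂ)) σ :=
    LSeriesSummable_of_bounded_of_one_lt_re (fun _ _ ↦ le_rfl) (by simpa using hσ)
  refine continuousOn_tsum (fun n ↦ ?_) hC'.norm fun n p hp ↦ ?_
  · rcases eq_or_ne n 0 with rfl | hn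
    · simpa using! continuousOn_const
    · have hn' : (n : ℂ) ≠ 0 := mod_cast hn
      simp only [LSeries.term_of_ne_zero hn]
      exact (((ha n).comp continuous_fst).div (continuous_const.cpow continuous_snd (by simp [hn]))
        (by simp [hn'])).continuousOn
  · calc ‖LSeries.term (a p.1) p.2 n‖ ≤ ‖LSeries.term (fun _ ↦ (C : ℂ)) p.2 n‖ :=
          LSeries.norm_term_le _ ((hC _ n).trans (by simpa using le_abs_self C))
      _ ≤ ‖LSeries.term (fun _ ↦ (C : ℂ)) σ n‖ :=
          LSeries.norm_term_le_of_re_le_re _ (by simpa using hp.2.le) n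

end BoundedCoefficients

section Twist

variable {N : ℕ} (χ : DirichletCharacter ℂ N)

/-- The completely multiplicative function `n ↦ g n * χ n`, for a character `g` of the monoid `ℕ+`.
Its value at `0` is set to `0`, even when `χ 0 = 1` (that is, when `N = 1`). -/
noncomputable def twist (g : ℕ+ →ₜ* Circle) : ℕ →*₀ ℂ where
  toFun n := if hn : 0 < n then g ⟨n, hn⟩ * χ n else 0
  map_zero' := by simp
  map_one' := by simp
  map_mul' m n := by
    rcases m.eq_zero_or_pos with rfl | hm
    · simp
    rcases n.eq_zero_or_pos with rfl | hn
    · simp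
    have : g ⟨m * n, mul_pos hm hn⟩ = g ⟨m, hm⟩ * g ⟨n, hn⟩ := map_mul g ⟨m, hm⟩ ⟨n, hn⟩
    simp only [hm, hn, mul_pos, ↓reduceDIte, this, Circle.coe_mul, Nat.cast_mul, map_mul]
    ring

lemma twist_coe (g : ℕ+ →ₜ* Circle) (n : ℕ+) : twist χ g n = g n * χ (n : ℕ) := dif_pos n.pos

lemma norm_twist_le_one (g : ℕ+ →ₜ* Circle) (n : ℕ) : ‖twist χ g n‖ ≤ 1 := by
  rcases n.eq_zero_or_pos with rfl | hn
  · simp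
  · lift n to ℕ+ using hn
    simpa only [twist_coe, norm_mul, Circle.norm_coe, one_mul] using χ.norm_le_one _

lemma continuous_twist_apply (n : ℕ) : Continuous fun g ↦ twist χ g n := by
  rcases n.eq_zero_or_pos with rfl | hn
  · simpa using! continuous_const
  · lift n to ℕ+ using hn
    simp only [twist_coe]
    fun_prop

/-- The character `n ↦ n ^ (-it)` of `ℕ+`. -/
noncomputable def cpowCharacter (t : ℝ) : ℕ+ →ₜ* Circle where
  toFun n := Circle.exp (-(t * Real.log n))
  map_one' := by simp
  map_mul' m n := by
    rw [← Circle.exp_add, PNat.mul_coe, Nat.cast_mul, Real.log_mul (by simp) (by simp)]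
    ring_nf
  continuous_toFun := continuous_of_discreteTopology

lemma cpowCharacter_apply (t : ℝ) (n : ℕ+) :
    cpowCharacter t n = Circle.exp (-(t * Real.log n)) := rfl

lemma coe_cpowCharacter (t : ℝ) (n : ℕ+) : (cpowCharacter t n : ℂ) = (n : ℂ) ^ (-(t * I)) := by
  rw [cpowCharacter_apply, Circle.coe_exp, cpow_def_of_ne_zero (by simp), ← ofReal_natCast,
    ← ofReal_log (by simp)]
  congr 1
  push_cast
  ring

/-- The one-parameter group `t ↦ (n ↦ n ^ (-it))` of characters of `ℕ+`; twisting a Dirichlet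
series by it is a vertical translation of the argument. -/
noncomputable def verticalFlow : Multiplicative ℝ →* (ℕ+ →ₜ* Circle) where
  toFun t := cpowCharacter t.toAdd
  map_one' := ContinuousMonoidHom.ext fun n ↦ by simp [cpowCharacter_apply]
  map_mul' t u := ContinuousMonoidHom.ext fun n ↦ by
    rw [ContinuousMonoidHom.mul_apply, cpowCharacter_apply, cpowCharacter_apply,
      cpowCharacter_apply, ← Circle.exp_add, toAdd_mul]
    ring_nf

lemma verticalFlow_ofAdd (t : ℝ) : verticalFlow (.ofAdd t) = cpowCharacter t := rfl

lemma LSeries_twist_cpowCharacter (t : ℝ) (s : ℂ) :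
    LSeries (twist χ (cpowCharacter t)) s = LSeries (χ ·) (s + t * I) := by
  refine tsum_congr fun n ↦ ?_
  rcases n.eq_zero_or_pos with rfl | hn
  · simp
  · lift n to ℕ+ using hn
    have hn : ((n : ℕ) : ℂ) ≠ 0 := by simp
    rw [LSeries.term_of_ne_zero n.ne_zero, LSeries.term_of_ne_zero n.ne_zero, twist_coe,
      coe_cpowCharacter, cpow_add _ _ hn, cpow_neg]
    field_simp

lemma denseRange_verticalFlow : DenseRange verticalFlow := by
  refine dense_of_forall_eq_imp_eq (H := verticalFlow.range) fun m n h ↦ ?_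
  by_contra hmn
  have h_log : Real.log m - Real.log n ≠ 0 := fun h0 ↦ hmn <| by
    exact_mod_cast Real.log_injOn_pos (by simp) (by simp) (sub_eq_zero.mp h0)
  -- At this height the values at `m` and `n` differ by the factor `-1`.
  have h_exp := h (cpowCharacter (Real.pi / (Real.log m - Real.log n))) ⟨.ofAdd _, rfl⟩
  rw [cpowCharacter_apply, cpowCharacter_apply, Circle.exp_eq_exp] at h_exp
  obtain ⟨k, hk⟩ := h_exp
  have : (-1 : ℝ) = k * 2 := by
    refine mul_left_cancel₀ h_log ?_
    field_simp at hk
    linarith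
  have : (-1 : ℤ) = k * 2 := mod_cast this
  omega

end Twist

section EulerProduct

open scoped ComplexOrder

lemma one_sub_ne_zero_of_summable_norm {F : Type*} [NormedField F] [CompleteSpace F] {f : ℕ →*₀ F}
    (hf : Summable (‖f ·‖)) {n : ℕ} (hn : 1 < n) : 1 - f n ≠ 0 := by
  have h_lt : ‖f n‖ < 1 := hf.of_norm.norm_lt_one (f := f.toMonoidHom) hn
  exact sub_ne_zero_of_ne fun h ↦ by simp [← h] at h_lt

lemma tsum_mul_prod_one_sub_eq {F : Type*} [NormedField F] [CompleteSpace F] {f g : ℕ →*₀ F}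
    (hf : Summable (‖f ·‖)) (hg : Summable (‖g ·‖)) {S : Finset Nat.Primes}
    (hfg : ∀ p ∉ S, f p = g p) :
    (∑' n, f n) * ∏ p ∈ S, (1 - f p) = (∑' n, g n) * ∏ p ∈ S, (1 - g p) := by
  classical
  have h_prod {h : ℕ →*₀ F} (hh : Summable (‖h ·‖)) :
      HasProd (fun p : Nat.Primes ↦ if p ∈ S then 1 else (1 - h p)⁻¹)
        ((∑' n, h n) * ∏ p ∈ S, (1 - h p)) := by
    have h_fin : HasProd (fun p : Nat.Primes ↦ if p ∈ S then 1 - h p else 1)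
        (∏ p ∈ S, if p ∈ S then 1 - h p else 1) :=
      hasProd_prod_of_ne_finset_one fun p hp ↦ if_neg hp
    rw [Finset.prod_congr rfl fun p hp ↦ if_pos hp] at h_fin
    refine ((EulerProduct.eulerProduct_completely_multiplicative_hasProd hh).mul h_fin).congr_fun
      fun p ↦ ?_
    split_ifs with hp
    · exact (inv_mul_cancel₀ (one_sub_ne_zero_of_summable_norm hh p.2.one_lt)).symm
    · exact (mul_one _).symm
  refine (h_prod hf).unique ((h_prod hg).congr_fun fun p ↦ ?_)
  split_ifs with hp
  · rfl
  · rw [hfg p hp]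

lemma tsum_pos_of_forall_im_eq_zero {f : ℕ →*₀ ℂ} (hf : Summable (‖f ·‖))
    (h_real : ∀ n, (f n).im = 0) : 0 < ∑' n, f n := by
  have h_log (p : Nat.Primes) : -log (1 - f p) = ((-Real.log (1 - (f p).re) : ℝ) : ℂ) := by
    have h_lt : ‖f p‖ < 1 := hf.of_norm.norm_lt_one (f := f.toMonoidHom) p.2.one_lt
    have h_re : (f p).re ≤ 1 := (re_le_norm _).trans h_lt.le
    rw [ofReal_neg, ofReal_log (by linarith)]
    congr 2
    exact Complex.ext (by simp) (by simp [h_real])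
  rw [← EulerProduct.exp_tsum_primes_log_eq_tsum hf, tsum_congr h_log, ← ofReal_tsum, ← ofReal_exp]
  exact_mod_cast Real.exp_pos _

end EulerProduct

section RealCoefficients

-- In this order `Icc (-1 : ℂ) 1` is the real segment `[-1, 1]`.
open scoped ComplexOrder

lemma norm_le_one_of_mem_Icc {z : ℂ} (hz : z ∈ Icc (-1) 1) : ‖z‖ ≤ 1 := by
  have h_im : z.im = 0 := by simpa using hz.2.2
  rw [← re_add_im z, h_im]
  simpa using abs_le.mpr ⟨by simpa using hz.1.1, by simpa using hz.2.1⟩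

lemma LSeries_eq_tsum (k : ℕ →*₀ ℂ) {s : ℂ} (hs : s ≠ 0) :
    LSeries k s = ∑' n, (k * riemannZetaSummandHom hs) n := by
  refine tsum_congr fun n ↦ ?_
  rw [LSeries.term_def₀ k.map_zero]
  rfl

variable {k : ℕ →*₀ ℂ}

lemma summable_norm_mul_riemannZetaSummandHom (hk : ∀ n, k n ∈ Icc (-1) 1) {s : ℂ} (hs : 1 < s.re) :
    Summable fun n ↦ ‖(k * riemannZetaSummandHom (ne_zero_of_one_lt_re hs)) n‖ := by
  refine (summable_riemannZetaSummand hs).of_nonneg_of_le (fun _ ↦ norm_nonneg _) fun n ↦ ?_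
  refine (norm_mul_le _ _).trans ?_
  exact mul_le_of_le_one_left (norm_nonneg _) (norm_le_one_of_mem_Icc (hk n))

lemma LSeries_ofReal_pos (hk : ∀ n, k n ∈ Icc (-1) 1) {σ : ℝ} (hσ : 1 < σ) : 0 < LSeries k σ := by
  have hs : 1 < (σ : ℂ).re := hσ
  rw [LSeries_eq_tsum k (ne_zero_of_one_lt_re hs)]
  refine tsum_pos_of_forall_im_eq_zero (summable_norm_mul_riemannZetaSummandHom hk hs) fun n ↦ ?_
  have h_im : (k n).im = 0 := by simpa using (hk n).2.2
  have h_cpow : (((n : ℂ) ^ (-(σ : ℂ))).im) = 0 := by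
    rw [← ofReal_natCast, ← ofReal_neg, ← ofReal_cpow n.cast_nonneg, ofReal_im]
  change (k n * (n : ℂ) ^ (-(σ : ℂ))).im = 0
  rw [mul_im, h_im, h_cpow, mul_zero, zero_mul, add_zero]

lemma one_sub_mul_cpow_pos {n : ℕ} (hk : k n ∈ Icc (-1) 1) (hn : 1 < n) {σ : ℝ} (hσ : 0 < σ) :
    0 < 1 - k n * (n : ℂ) ^ (-(σ : ℂ)) := by
  have h_cpow : (n : ℂ) ^ (-(σ : ℂ)) = (((n : ℝ) ^ (-σ) : ℝ) : ℂ) := by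
    rw [ofReal_cpow n.cast_nonneg, ofReal_natCast, ofReal_neg]
  have h_pos : 0 ≤ (n : ℂ) ^ (-(σ : ℂ)) := by
    rw [h_cpow]
    exact_mod_cast Real.rpow_nonneg n.cast_nonneg _
  have h_lt : (n : ℂ) ^ (-(σ : ℂ)) < 1 := by
    rw [h_cpow]
    exact_mod_cast Real.rpow_lt_one_of_one_lt_of_neg (Nat.one_lt_cast.mpr hn) (neg_lt_zero.mpr hσ)
  exact sub_pos.mpr ((mul_le_of_le_one_left h_pos hk.2).trans_lt h_lt)

theorem exists_pos_tendsto_sub_one_mul_LSeries_of_eventually_eq {k' : ℕ →*₀ ℂ}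
    (hk : ∀ n, k n ∈ Icc (-1) 1) (hk' : ∀ n, k' n ∈ Icc (-1) 1)
    (h_eq : ∀ᶠ p : Nat.Primes in cofinite, k p = k' p) {b : ℂ}
    (hb : Tendsto (fun σ : ℝ ↦ (σ - 1) * LSeries k' σ) (𝓝[>] 1) (𝓝 b)) :
    ∃ r : ℂ, 0 < r ∧ Tendsto (fun σ : ℝ ↦ (σ - 1) * LSeries k σ) (𝓝[>] 1) (𝓝 (r * b)) := by
  let S : Finset Nat.Primes := (eventually_cofinite.mp h_eq).toFinset
  let P (f : ℕ →*₀ ℂ) (σ : ℝ) : ℂ := ∏ p ∈ S, (1 - f p * (p : ℂ) ^ (-(σ : ℂ)))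
  have hP_pos {f : ℕ →*₀ ℂ} (hf : ∀ n, f n ∈ Icc (-1) 1) {σ : ℝ} (hσ : 0 < σ) : 0 < P f σ :=
    Finset.prod_pos fun p _ ↦ one_sub_mul_cpow_pos (hf p) p.2.one_lt hσ
  have hP_cont (f : ℕ →*₀ ℂ) : Continuous (P f) := continuous_finsetProd _ fun p _ ↦
    continuous_const.sub <| continuous_const.mul <|
      continuous_const.cpow (by fun_prop) fun _ ↦ Or.inl (by simpa using p.2.pos)
  refine ⟨P k' 1 / P k 1, div_pos (hP_pos hk' one_pos) (hP_pos hk one_pos), ?_⟩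
  have h_lim : Tendsto (fun σ ↦ P k' σ / P k σ) (𝓝[>] 1) (𝓝 (P k' 1 / P k 1)) :=
    ((hP_cont k').continuousAt.div (hP_cont k).continuousAt
      (hP_pos hk one_pos).ne').tendsto.mono_left nhdsWithin_le_nhds
  refine (h_lim.mul hb).congr' ?_
  filter_upwards [self_mem_nhdsWithin] with σ hσ
  have hs : 1 < (σ : ℂ).re := hσ
  have h_prod : LSeries k σ * P k σ = LSeries k' σ * P k' σ := by
    rw [LSeries_eq_tsum k (ne_zero_of_one_lt_re hs), LSeries_eq_tsum k' (ne_zero_of_one_lt_re hs)]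
    exact tsum_mul_prod_one_sub_eq (summable_norm_mul_riemannZetaSummandHom hk hs)
      (summable_norm_mul_riemannZetaSummandHom hk' hs)
      fun p hp ↦ congrArg (· * _) (by simpa [S] using hp)
  have hP : P k σ ≠ 0 := (hP_pos hk (one_pos.trans hσ)).ne'
  field_simp
  linear_combination (1 - (σ : ℂ)) * h_prod

end RealCoefficients

section SignCharacter

/-- The character of `ℕ+` with prescribed values at the primes, by unique factorization. -/
noncomputable def primeValuesCharacter : (Nat.Primes → Circle) →* (ℕ+ →ₜ* Circle) where
  toFun f :=
    { toFun := fun n ↦ (Multiset.map f n.factorMultiset).prod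
      map_one' := by rw [PNat.factorMultiset_one]; rfl
      map_mul' := fun m n ↦ by
        rw [PNat.factorMultiset_mul]
        exact (congrArg _ (Multiset.map_add f _ _)).trans (Multiset.prod_add _ _)
      continuous_toFun := continuous_of_discreteTopology }
  map_one' := ContinuousMonoidHom.ext fun n ↦
    (Multiset.prod_map_one (M := Circle) (m := n.factorMultiset) :)
  map_mul' f g := ContinuousMonoidHom.ext fun n ↦
    (Multiset.prod_map_mul (f := f) (g := g) (m := n.factorMultiset) :)

lemma primeValuesCharacter_apply (f : Nat.Primes → Circle) (n : ℕ+) :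
    primeValuesCharacter f n = (Multiset.map f n.factorMultiset).prod := rfl

lemma primeValuesCharacter_apply_prime (f : Nat.Primes → Circle) (p : Nat.Primes) :
    primeValuesCharacter f p = f p := by
  rw [primeValuesCharacter_apply, PNat.factorMultiset_ofPrime]
  exact Multiset.prod_singleton _

lemma continuous_primeValuesCharacter : Continuous primeValuesCharacter := by
  refine ContinuousMonoidHom.continuous_of_continuous_uncurry _
    (continuous_prod_of_discrete_right.mpr fun n ↦ ?_)
  exact continuous_multiset_prod (f := fun p (f : Nat.Primes → Circle) ↦ f p) n.factorMultiset
    fun p _ ↦ continuous_apply p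

variable {N : ℕ} (χ : DirichletCharacter ℂ N)

open Classical in
/-- The quadratic character of `ℕ+` which, for quadratic `χ`, is `1` at the primes `p ≤ M` and
agrees with `χ` at the primes `p > M` not dividing `N`. It tends to `1` as `M → ∞`, while its
product with `χ` is `1` at almost all primes. -/
noncomputable def signCharacter (M : ℕ) : ℕ+ →ₜ* Circle :=
  primeValuesCharacter fun p ↦ if p ≤ M ∨ χ p = 1 then 1 else -1

lemma signCharacter_sq (M : ℕ) : signCharacter χ M ^ 2 = 1 := by
  rw [signCharacter, ← map_pow, ← map_one primeValuesCharacter]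
  congr 1
  ext p : 1
  simp only [Pi.pow_apply, Pi.one_apply]
  split_ifs <;> simp

lemma tendsto_signCharacter : Tendsto (signCharacter χ) atTop (𝓝 1) := by
  rw [← map_one primeValuesCharacter]
  refine (continuous_primeValuesCharacter.tendsto 1).comp (tendsto_pi_nhds.mpr fun p ↦ ?_)
  refine tendsto_const_nhds.congr' ?_
  filter_upwards [eventually_ge_atTop (p : ℕ)] with M hM
  simp [hM]

variable {χ}

lemma isUnit_natCast_of_lt [NeZero N] {p : Nat.Primes} (hp : N < p) : IsUnit ((p : ℕ) : ZMod N) :=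
  (ZMod.isUnit_iff_coprime p N).mpr (Nat.coprime_of_lt_prime (NeZero.ne N) hp p.2)

lemma coe_signCharacter_apply_prime [NeZero N] (hχ : χ.IsQuadratic) {M : ℕ} (hM : N ≤ M)
    {p : Nat.Primes} (hp : M < p) : (signCharacter χ M p : ℂ) = χ p := by
  have h_ne : χ p ≠ 0 := ((isUnit_natCast_of_lt (hM.trans_lt hp)).map χ).ne_zero
  rw [signCharacter, primeValuesCharacter_apply_prime]
  rcases hχ p with h | h | h
  · exact absurd h h_ne
  · simp [h]
  · rw [h, if_neg (by norm_num [hp.not_ge, h])]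
    simp

end SignCharacter

section RealTwist

open scoped ComplexOrder

lemma coe_apply_eq_one_or_neg_one {g : ℕ+ →ₜ* Circle} (hg : g ^ 2 = 1) (n : ℕ+) :
    (g n : ℂ) = 1 ∨ (g n : ℂ) = -1 := by
  rw [← sq_eq_one_iff]
  exact congr(($hg n : ℂ))

variable {N : ℕ} {χ : DirichletCharacter ℂ N} {g : ℕ+ →ₜ* Circle}

lemma twist_mem_Icc (hχ : χ.IsQuadratic) (hg : g ^ 2 = 1) (n : ℕ) : twist χ g n ∈ Icc (-1) 1 := by
  rcases n.eq_zero_or_pos with rfl | hn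
  · simp
  · lift n to ℕ+ using hn
    rw [twist_coe]
    rcases coe_apply_eq_one_or_neg_one hg n with h | h <;> rcases hχ (n : ℕ) with h' | h' | h' <;>
      simp [h, h', neg_le_self zero_le_one]

lemma LSeries_twist_pos (hχ : χ.IsQuadratic) (hg : g ^ 2 = 1) {σ : ℝ} (hσ : 1 < σ) :
    0 < LSeries (twist χ g) σ :=
  LSeries_ofReal_pos (twist_mem_Icc hχ hg) hσ

lemma isQuadratic_one : (1 : DirichletCharacter ℂ N).IsQuadratic := fun a ↦ by
  by_cases ha : IsUnit a
  · exact .inr (.inl (MulChar.one_apply ha))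
  · exact .inl (MulChar.map_nonunit _ ha)

lemma tendsto_ofReal_nhdsGT_nhdsNE (x : ℝ) : Tendsto ofReal (𝓝[>] x) (𝓝[≠] (x : ℂ)) :=
  tendsto_nhdsWithin_iff.mpr ⟨(continuous_ofReal.tendsto x).mono_left nhdsWithin_le_nhds,
    by filter_upwards [self_mem_nhdsWithin] with σ hσ using by simpa using (ne_of_gt hσ)⟩

lemma LSeries_twist_one [NeZero N] (χ : DirichletCharacter ℂ N) {s : ℂ} (hs : 1 < s.re) :
    LSeries (twist χ 1) s = χ.LFunction s := by
  rw [χ.LFunction_eq_LSeries hs, ← map_one verticalFlow, ← ofAdd_zero, verticalFlow_ofAdd,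
    LSeries_twist_cpowCharacter]
  simp

lemma tendsto_sub_one_mul_LSeries_twist_one_of_ne_one [NeZero N] (hχ : χ ≠ 1) :
    Tendsto (fun σ : ℝ ↦ (σ - 1) * LSeries (twist χ 1) σ) (𝓝[>] 1) (𝓝 0) := by
  have h_cont : Continuous fun σ : ℝ ↦ (σ - 1) * χ.LFunction σ :=
    (by fun_prop : Continuous fun σ : ℝ ↦ (σ - 1 : ℂ)).mul <|
      (DirichletCharacter.differentiable_LFunction hχ).continuous.comp continuous_ofReal
  refine ((h_cont.tendsto' 1 0 (by simp)).mono_left nhdsWithin_le_nhds).congr' ?_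
  filter_upwards [self_mem_nhdsWithin] with σ hσ
  rw [LSeries_twist_one χ (by simpa using hσ)]

lemma tendsto_sub_one_mul_LSeries_twist_one_one :
    Tendsto (fun σ : ℝ ↦ (σ - 1) * LSeries (twist (1 : DirichletCharacter ℂ 1) 1) σ)
      (𝓝[>] 1) (𝓝 1) := by
  refine (riemannZeta_residue_one.comp (tendsto_ofReal_nhdsGT_nhdsNE 1)).congr' ?_
  filter_upwards [self_mem_nhdsWithin] with σ hσ
  rw [LSeries_twist_one _ (by simpa using hσ), DirichletCharacter.LFunction_modOne_eq]
  rfl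

lemma eventually_cofinite_lt_prime (M : ℕ) : ∀ᶠ p : Nat.Primes in cofinite, M < p :=
  (Nat.cofinite_eq_atTop ▸ Nat.Primes.coe_nat_injective.tendsto_cofinite).eventually_gt_atTop M

lemma twist_apply_prime (g : ℕ+ →ₜ* Circle) (p : Nat.Primes) : twist χ g p = g p * χ p :=
  twist_coe χ g p

variable {M : ℕ}

lemma exists_pos_tendsto_sub_one_mul_LSeries_twist_signCharacter [NeZero N]
    (hχ : χ.IsQuadratic) (hM : N ≤ M) :
    ∃ r : ℂ, 0 < r ∧
      Tendsto (fun σ : ℝ ↦ (σ - 1) * LSeries (twist χ (signCharacter χ M)) σ) (𝓝[>] 1) (𝓝 r) := by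
  have h_eq : ∀ᶠ p : Nat.Primes in cofinite,
      twist χ (signCharacter χ M) p = twist (1 : DirichletCharacter ℂ 1) 1 p := by
    filter_upwards [eventually_cofinite_lt_prime M] with p hp
    have h_sq : χ p * χ p = 1 := by
      rw [← pow_two, ← MulChar.pow_apply' χ two_ne_zero, hχ.sq_eq_one,
        MulChar.one_apply (isUnit_natCast_of_lt (hM.trans_lt hp))]
    rw [twist_apply_prime, twist_apply_prime, coe_signCharacter_apply_prime hχ hM hp, h_sq,
      MulChar.one_apply (isUnit_of_subsingleton _)]
    simp
  simpa only [mul_one] using exists_pos_tendsto_sub_one_mul_LSeries_of_eventually_eq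
    (twist_mem_Icc hχ (signCharacter_sq χ M)) (twist_mem_Icc isQuadratic_one (one_pow 2)) h_eq
    tendsto_sub_one_mul_LSeries_twist_one_one

lemma tendsto_sub_one_mul_LSeries_one_twist_signCharacter [NeZero N]
    (hχ : χ.IsQuadratic) (hχ_ne : χ ≠ 1) (hM : N ≤ M) :
    Tendsto (fun σ : ℝ ↦ (σ - 1) *
      LSeries (twist (1 : DirichletCharacter ℂ 1) (signCharacter χ M)) σ) (𝓝[>] 1) (𝓝 0) := by
  have h_eq : ∀ᶠ p : Nat.Primes in cofinite,
      twist (1 : DirichletCharacter ℂ 1) (signCharacter χ M) p = twist χ 1 p := by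
    filter_upwards [eventually_cofinite_lt_prime M] with p hp
    rw [twist_apply_prime, twist_apply_prime, coe_signCharacter_apply_prime hχ hM hp,
      MulChar.one_apply (isUnit_of_subsingleton _)]
    simp
  obtain ⟨r, -, hr⟩ := exists_pos_tendsto_sub_one_mul_LSeries_of_eventually_eq
    (twist_mem_Icc isQuadratic_one (signCharacter_sq χ M)) (twist_mem_Icc hχ (one_pow 2)) h_eq
    (tendsto_sub_one_mul_LSeries_twist_one_of_ne_one hχ_ne)
  rwa [mul_zero] at hr

end RealTwist

section TwistedEpstein

open scoped ComplexOrder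

variable {N : ℕ} (χ : DirichletCharacter ℂ N) (κ c : ℝ)

/-- The function `s ↦ L(s + κ, g) L(s, gχ) - c L(s, g) L(s + κ, gχ)` attached to a character `g` of
`ℕ+`. The characters `n ↦ n ^ (-it)` give the vertical translates of the combination
`ζ(s) L(s - κ, χ) - c ζ(s - κ) L(s, χ)`, with `s + κ` in place of `s`, so that all Dirichlet series
converge absolutely for `Re s > 1`. -/
noncomputable def twistedEpstein (g : ℕ+ →ₜ* Circle) (s : ℂ) : ℂ :=
  LSeries (twist (1 : DirichletCharacter ℂ 1) g) (s + κ) * LSeries (twist χ g) s -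
    c * LSeries (twist (1 : DirichletCharacter ℂ 1) g) s * LSeries (twist χ g) (s + κ)

variable {κ}

lemma twistedEpstein_cpowCharacter [NeZero N] (hκ : 0 ≤ κ) (t : ℝ) {s : ℂ}
    (hs : 1 < s.re) :
    twistedEpstein χ κ c (cpowCharacter t) s =
      riemannZeta (s + κ + t * I) * χ.LFunction (s + t * I) -
        c * riemannZeta (s + t * I) * χ.LFunction (s + κ + t * I) := by
  have h_re : 1 < (s + t * I).re := by simpa using hs
  have h_re_add : 1 < (s + κ + t * I).re := by simpa using lt_add_of_lt_of_nonneg hs hκ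
  simp only [twistedEpstein, LSeries_twist_cpowCharacter,
    ← DirichletCharacter.LFunction_eq_LSeries _ h_re,
    ← DirichletCharacter.LFunction_eq_LSeries _ h_re_add, DirichletCharacter.LFunction_modOne_eq]

lemma differentiableOn_twistedEpstein (hκ : 0 ≤ κ) (g : ℕ+ →ₜ* Circle) :
    DifferentiableOn ℂ (twistedEpstein χ κ c g) {s | 1 < s.re} := by
  have h (N : ℕ) (χ : DirichletCharacter ℂ N) :
      DifferentiableOn ℂ (LSeries (twist χ g)) {s | 1 < s.re} :=
    differentiableOn_LSeries_of_norm_le (norm_twist_le_one χ g)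
  have h_add (N : ℕ) (χ : DirichletCharacter ℂ N) :
      DifferentiableOn ℂ (fun s ↦ LSeries (twist χ g) (s + κ)) {s | 1 < s.re} :=
    (h N χ).comp (by fun_prop) fun s (hs : 1 < s.re) ↦ by
      simpa using lt_add_of_lt_of_nonneg hs hκ
  exact ((h_add _ _).mul (h _ _)).sub (((h _ _).const_mul _).mul (h_add _ _))

lemma continuousOn_uncurry_twistedEpstein (hκ : 0 ≤ κ) :
    ContinuousOn (Function.uncurry (twistedEpstein χ κ c)) (univ ×ˢ {s | 1 < s.re}) := by
  have h (N : ℕ) (χ : DirichletCharacter ℂ N) :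
      ContinuousOn (fun p : (ℕ+ →ₜ* Circle) × ℂ ↦ LSeries (twist χ p.1) p.2)
        (univ ×ˢ {s | 1 < s.re}) :=
    continuousOn_uncurry_LSeries (continuous_twist_apply χ) (norm_twist_le_one χ)
  have h_add (N : ℕ) (χ : DirichletCharacter ℂ N) :
      ContinuousOn (fun p : (ℕ+ →ₜ* Circle) × ℂ ↦ LSeries (twist χ p.1) (p.2 + κ))
        (univ ×ˢ {s | 1 < s.re}) :=
    (h N χ).comp (f := fun p : (ℕ+ →ₜ* Circle) × ℂ ↦ (p.1, p.2 + κ)) (by fun_prop)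
      fun p ⟨_, (hp : 1 < p.2.re)⟩ ↦ ⟨mem_univ _, by simpa using lt_add_of_lt_of_nonneg hp hκ⟩
  exact ((h_add _ _).mul (h _ _)).sub ((continuousOn_const.mul (h _ _)).mul (h_add _ _))

variable {χ} {g : ℕ+ →ₜ* Circle}

lemma tendsto_sub_one_mul_twistedEpstein (hκ : 0 < κ) {a b : ℂ}
    (ha : Tendsto (fun σ : ℝ ↦ (σ - 1) * LSeries (twist χ g) σ) (𝓝[>] 1) (𝓝 a))
    (hb : Tendsto (fun σ : ℝ ↦ (σ - 1) * LSeries (twist (1 : DirichletCharacter ℂ 1) g) σ)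
      (𝓝[>] 1) (𝓝 b)) :
    Tendsto (fun σ : ℝ ↦ (σ - 1) * twistedEpstein χ κ c g σ) (𝓝[>] 1)
      (𝓝 (LSeries (twist (1 : DirichletCharacter ℂ 1) g) (1 + κ) * a -
        c * b * LSeries (twist χ g) (1 + κ))) := by
  have h_shift (N : ℕ) (χ : DirichletCharacter ℂ N) :
      Tendsto (fun σ : ℝ ↦ LSeries (twist χ g) (σ + κ)) (𝓝[>] 1)
        (𝓝 (LSeries (twist χ g) (1 + κ))) := by
    have h_at : ContinuousAt (LSeries (twist χ g)) ((1 : ℝ) + κ) :=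
      (differentiableOn_LSeries_of_norm_le (norm_twist_le_one χ g)).continuousOn.continuousAt
        ((isOpen_lt continuous_const continuous_re).mem_nhds (by simpa using hκ))
    rw [ofReal_one] at h_at
    exact (h_at.tendsto.comp (Continuous.tendsto' (by fun_prop) 1 _ (by simp))).mono_left
      nhdsWithin_le_nhds
  refine (((h_shift _ _).mul ha).sub ((hb.const_mul (c : ℂ)).mul (h_shift _ _))).congr fun σ ↦ ?_
  rw [twistedEpstein]
  ring

lemma twistedEpstein_im_eq_zero (hκ : 0 ≤ κ) (hχ : χ.IsQuadratic) (hg : g ^ 2 = 1) {σ : ℝ}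
    (hσ : 1 < σ) : (twistedEpstein χ κ c g σ).im = 0 := by
  have h_im {N : ℕ} {χ : DirichletCharacter ℂ N} (hχ : χ.IsQuadratic) {σ : ℝ} (hσ : 1 < σ) :
      (LSeries (twist χ g) σ).im = 0 := by simpa using (LSeries_twist_pos hχ hg hσ).2.symm
  have hσκ : 1 < σ + κ := by linarith
  simp [twistedEpstein, ← ofReal_add, h_im, hχ, isQuadratic_one, hσ, hσκ]

variable {c}

lemma eventually_twistedEpstein_one_re_neg [NeZero N] (hκ : 0 < κ) (hc : 0 < c)
    (hχ : χ.IsQuadratic) (hχ_ne : χ ≠ 1) :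
    ∀ᶠ σ : ℝ in 𝓝[>] 1, (twistedEpstein χ κ c 1 σ).re < 0 := by
  have h_lim := tendsto_sub_one_mul_twistedEpstein c hκ
    (tendsto_sub_one_mul_LSeries_twist_one_of_ne_one hχ_ne)
    tendsto_sub_one_mul_LSeries_twist_one_one
  have h_pos : 0 < (LSeries (twist χ 1) (1 + κ)).re := by
    simpa using (pos_iff.mp (LSeries_twist_pos hχ (one_pow 2) (lt_add_of_pos_right 1 hκ))).1
  filter_upwards [((continuous_re.tendsto _).comp h_lim).eventually_lt_const (u := 0)
    (by simpa using mul_pos hc h_pos), self_mem_nhdsWithin] with σ h_neg hσ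
  rw [Function.comp_apply, ← ofReal_one, ← ofReal_sub, re_ofReal_mul] at h_neg
  exact (pos_iff_neg_of_mul_neg h_neg).mp (sub_pos.mpr hσ)

lemma eventually_twistedEpstein_signCharacter_re_pos [NeZero N] (hκ : 0 < κ)
    (hχ : χ.IsQuadratic) (hχ_ne : χ ≠ 1) {M : ℕ} (hM : N ≤ M) :
    ∀ᶠ σ : ℝ in 𝓝[>] 1, 0 < (twistedEpstein χ κ c (signCharacter χ M) σ).re := by
  obtain ⟨r, hr, h_tendsto⟩ := exists_pos_tendsto_sub_one_mul_LSeries_twist_signCharacter hχ hM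
  have h_lim := tendsto_sub_one_mul_twistedEpstein c hκ h_tendsto
    (tendsto_sub_one_mul_LSeries_one_twist_signCharacter hχ hχ_ne hM)
  have h_pos :
      0 < (LSeries (twist (1 : DirichletCharacter ℂ 1) (signCharacter χ M)) (1 + κ) * r).re := by
    have h_L := LSeries_twist_pos isQuadratic_one (N := 1) (signCharacter_sq χ M)
      (lt_add_of_pos_right 1 hκ)
    push_cast at h_L
    exact (pos_iff.mp (mul_pos h_L hr)).1
  filter_upwards [((continuous_re.tendsto _).comp h_lim).eventually_const_lt (u := 0)
    (by simpa using h_pos), self_mem_nhdsWithin] with σ h_re hσ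
  rw [Function.comp_apply, ← ofReal_one, ← ofReal_sub, re_ofReal_mul] at h_re
  exact (pos_iff_pos_of_mul_pos h_re).mp (sub_pos.mpr hσ)

lemma exists_twistedEpstein_sign_change [NeZero N] (hκ : 0 < κ) (hc : 0 < c)
    (hχ : χ.IsQuadratic) (hχ_ne : χ ≠ 1) {δ : ℝ} (hδ : 0 < δ) :
    ∃ g : ℕ+ →ₜ* Circle, g ^ 2 = 1 ∧ ∃ σ₁ σ₂ : ℝ, 1 < σ₁ ∧ σ₁ < σ₂ ∧ σ₂ < 1 + δ ∧
      0 < (twistedEpstein χ κ c g σ₁).re ∧ (twistedEpstein χ κ c g σ₂).re < 0 := by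
  obtain ⟨σ₂, h_neg_one, hσ₂, hσ₂δ⟩ := ((eventually_twistedEpstein_one_re_neg hκ hc hχ hχ_ne).and
    (Ioo_mem_nhdsGT (lt_add_of_pos_right 1 hδ))).exists
  have h_at : ContinuousAt (fun g ↦ twistedEpstein χ κ c g σ₂) 1 :=
    ((continuousOn_uncurry_twistedEpstein χ c hκ.le).continuousAt (prod_mem_nhds univ_mem
      ((isOpen_lt continuous_const continuous_re).mem_nhds (by simpa using hσ₂)))).comp
      (f := fun g ↦ (g, (σ₂ : ℂ))) (by fun_prop)
  obtain ⟨M, h_neg, hM⟩ : ∃ M, (twistedEpstein χ κ c (signCharacter χ M) σ₂).re < 0 ∧ N ≤ M :=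
    ((((continuous_re.tendsto _).comp (h_at.tendsto.comp
      (tendsto_signCharacter χ))).eventually_lt_const h_neg_one).and (eventually_ge_atTop N)).exists
  obtain ⟨σ₁, h_pos, hσ₁, hσ₁₂⟩ :=
    ((eventually_twistedEpstein_signCharacter_re_pos (c := c) hκ hχ hχ_ne hM).and
      (Ioo_mem_nhdsGT hσ₂)).exists
  exact ⟨_, signCharacter_sq χ M, σ₁, σ₂, hσ₁, hσ₁₂, hσ₂δ, h_pos, h_neg⟩

lemma exists_twistedEpstein_eq_zero_of_sign_change (hκ : 0 ≤ κ) (hχ : χ.IsQuadratic)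
    (hg : g ^ 2 = 1) {σ₁ σ₂ : ℝ} (hσ₁ : 1 < σ₁) (hσ₁₂ : σ₁ < σ₂)
    (h_pos : 0 < (twistedEpstein χ κ c g σ₁).re) (h_neg : (twistedEpstein χ κ c g σ₂).re < 0) :
    ∃ σ ∈ Icc σ₁ σ₂, twistedEpstein χ κ c g σ = 0 ∧
      ∃ᶠ s in 𝓝 (σ : ℂ), twistedEpstein χ κ c g s ≠ 0 := by
  have h_diff := differentiableOn_twistedEpstein χ c hκ g
  have h_cont : ContinuousOn (fun σ : ℝ ↦ (twistedEpstein χ κ c g σ).re) (Icc σ₁ σ₂) :=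
    continuous_re.comp_continuousOn (h_diff.continuousOn.comp continuous_ofReal.continuousOn
      fun σ hσ ↦ hσ₁.trans_le hσ.1)
  obtain ⟨σ, hσ, h_re⟩ := intermediate_value_Icc' hσ₁₂.le h_cont ⟨h_neg.le, h_pos.le⟩
  have hσ_gt : 1 < σ := hσ₁.trans_le hσ.1
  refine ⟨σ, hσ, Complex.ext h_re (twistedEpstein_im_eq_zero c hκ hχ hg hσ_gt), fun h ↦ ?_⟩
  have h_zero : EqOn (twistedEpstein χ κ c g) 0 {s | 1 < s.re} :=
    (h_diff.analyticOnNhd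
      (isOpen_lt continuous_const continuous_re)).eqOn_zero_of_preconnected_of_eventuallyEq_zero
      (convex_halfSpace_re_gt 1).isPreconnected (z₀ := σ) hσ_gt (by simpa using! h)
  have h_zero_σ₂ : twistedEpstein χ κ c g σ₂ = 0 := h_zero (hσ₁.trans hσ₁₂)
  simp [h_zero_σ₂] at h_neg

theorem exists_forall_exists_zero_near [NeZero N] (hκ : 0 < κ) (hc : 0 < c) (hχ : χ.IsQuadratic)
    (hχ_ne : χ ≠ 1) {δ : ℝ} (hδ : 0 < δ) :
    ∃ R > 0, ∀ x : ℝ, ∃ s : ℂ, (κ + 1 < s.re ∧ s.re < κ + 1 + δ ∧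
      riemannZeta s * χ.LFunction (s - κ) - c * riemannZeta (s - κ) * χ.LFunction s = 0) ∧
      |s.im - x| ≤ R := by
  obtain ⟨g, hg, σ₁, σ₂, hσ₁, hσ₁₂, hσ₂, h_pos, h_neg⟩ :=
    exists_twistedEpstein_sign_change hκ hc hχ hχ_ne hδ
  obtain ⟨σ, hσ, h_zero, h_ne⟩ :=
    exists_twistedEpstein_eq_zero_of_sign_change hκ.le hχ hg hσ₁ hσ₁₂ h_pos h_neg
  let W : Set ℂ := {s | s.re ∈ Ioo 1 (1 + δ)} ∩ {s | |s.im| < 1}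
  have hW : W ∈ 𝓝 (σ : ℂ) :=
    ((isOpen_Ioo.preimage continuous_re).inter
      (isOpen_lt continuous_im.abs continuous_const)).mem_nhds
      ⟨⟨hσ₁.trans_le hσ.1, hσ.2.trans_lt hσ₂⟩, by simp⟩
  obtain ⟨G, hG_zero, hG_open, hgG⟩ := eventually_nhds_iff.mp <|
    eventually_exists_mem_eq_zero (isOpen_lt continuous_const continuous_re)
      (continuousOn_uncurry_twistedEpstein χ c hκ.le) (differentiableOn_twistedEpstein χ c hκ.le)
      (hσ₁.trans_le hσ.1) h_zero h_ne hW
  obtain ⟨R, hR⟩ := exists_forall_exists_abs_sub_le_mem denseRange_verticalFlow hG_open ⟨g, hgG⟩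
  obtain ⟨t₀, ht₀, -⟩ := hR 0
  refine ⟨R + 1, by linarith [abs_nonneg (t₀ - 0)], fun x ↦ ?_⟩
  obtain ⟨t, htx, htG⟩ := hR x
  obtain ⟨s, ⟨⟨hs, hsδ⟩, hs_im⟩, hs_zero⟩ := hG_zero _ htG
  rw [verticalFlow_ofAdd, twistedEpstein_cpowCharacter χ c hκ.le t hs] at hs_zero
  have h_re : (s + κ + t * I).re = s.re + κ := by simp
  have h_im : (s + κ + t * I).im - x = t - x + s.im := by
    simp only [add_im, ofReal_im, im_ofReal_mul, I_im]
    ring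
  refine ⟨s + κ + t * I, ⟨by linarith, by linarith, ?_⟩, ?_⟩
  · rwa [show s + κ + t * I - κ = s + t * I by ring]
  · rw [h_im]
    exact (abs_add_le _ _).trans (add_le_add htx (le_of_lt hs_im))

end TwistedEpstein

section Counting

lemma exists_injective_seq {S : Set ℂ} {R : ℝ} (hR : 0 < R)
    (hS : ∀ x : ℝ, ∃ s ∈ S, |s.im - x| ≤ R) :
    ∃ z : ℕ → ℂ, Function.Injective z ∧
      ∀ k, z k ∈ S ∧ 0 ≤ (z k).im ∧ (z k).im ≤ 3 * R * (k + 1) := by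
  choose z hzS hz using fun k : ℕ ↦ hS ((3 * k + 1) * R)
  have h_lower : ∀ k : ℕ, 3 * R * k ≤ (z k).im := fun k ↦ by linarith [(abs_le.mp (hz k)).1]
  have h_upper : ∀ k : ℕ, (z k).im < 3 * R * (k + 1) := fun k ↦ by
    linarith [(abs_le.mp (hz k)).2]
  have h_mono : StrictMono fun k ↦ (z k).im := strictMono_nat_of_lt_succ fun k ↦ by
    have := h_lower (k + 1)
    push_cast at this
    linarith [h_upper k]
  exact ⟨z, fun j k h ↦ h_mono.injective (congrArg im h),
    fun k ↦ ⟨hzS k, (by positivity : 0 ≤ 3 * R * k).trans (h_lower k), (h_upper k).le⟩⟩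

lemma infinite_of_forall_exists_abs_im_sub_le {S : Set ℂ} {R : ℝ} (hR : 0 < R)
    (hS : ∀ x : ℝ, ∃ s ∈ S, |s.im - x| ≤ R) : S.Infinite := by
  obtain ⟨z, hz_inj, hz⟩ := exists_injective_seq hR hS
  exact infinite_of_injective_forall_mem hz_inj fun k ↦ (hz k).1

lemma atLeastCard_of_forall_exists_abs_im_sub_le {S : Set ℂ} {R : ℝ} (hR : 0 < R)
    (hS : ∀ x : ℝ, ∃ s ∈ S, |s.im - x| ≤ R) {T : ℝ} (hT : 6 * R ≤ T) :
    AtLeastCard {s ∈ S | s.im ∈ Icc 0 T} (1 / (6 * R) * T) := by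
  classical
  obtain ⟨z, hz_inj, hz⟩ := exists_injective_seq hR hS
  refine ⟨(Finset.range ⌊T / (3 * R)⌋₊).image z, ?_, ?_⟩
  · intro s hs
    obtain ⟨k, hk, rfl⟩ := Finset.mem_image.mp (Finset.mem_coe.mp hs)
    have hkT : ((k + 1 : ℕ) : ℝ) ≤ T / (3 * R) :=
      (Nat.le_floor_iff (div_nonneg (by linarith) (by linarith))).mp (Finset.mem_range.mp hk)
    rw [le_div_iff₀ (by positivity)] at hkT
    push_cast at hkT
    exact ⟨(hz k).1, (hz k).2.1, (hz k).2.2.trans (by linarith)⟩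
  · rw [Finset.card_image_of_injective _ hz_inj, Finset.card_range]
    have h_one_le : 1 ≤ T / (6 * R) := by rwa [one_le_div (by positivity)]
    calc 1 / (6 * R) * T = T / (6 * R) := by ring
      _ ≤ T / (3 * R) - 1 := by linarith [show T / (3 * R) = 2 * (T / (6 * R)) by field_simp; ring]
      _ ≤ ⌊T / (3 * R)⌋₊ := (Nat.sub_one_lt_floor _).le

end Counting

theorem statement_16_general {N : ℕ} [NeZero N] {χ : DirichletCharacter ℂ N} (hχ : χ.IsQuadratic)
    (hχ_ne : χ ≠ 1) {κ c δ : ℝ} (hκ : 0 < κ) (hc : 0 < c) (hδ : 0 < δ) :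
    (∃ c' : ℝ, 0 < c' ∧ ∃ T₀ : ℝ, 0 < T₀ ∧ ∀ T : ℝ, T₀ ≤ T →
      AtLeastCard {s : ℂ | κ + 1 < s.re ∧ s.re < κ + 1 + δ ∧ s.im ∈ Icc 0 T ∧
        riemannZeta s * χ.LFunction (s - κ) - c * riemannZeta (s - κ) * χ.LFunction s = 0}
        (c' * T)) ∧
    {s : ℂ | κ + 1 < s.re ∧ s.re < κ + 1 + δ ∧
      riemannZeta s * χ.LFunction (s - κ) -
        c * riemannZeta (s - κ) * χ.LFunction s = 0}.Infinite := by
  obtain ⟨R, hR, h_near⟩ := exists_forall_exists_zero_near hκ hc hχ hχ_ne hδ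
  refine ⟨⟨1 / (6 * R), by positivity, 6 * R, by positivity, fun T hT ↦ ?_⟩,
    infinite_of_forall_exists_abs_im_sub_le hR h_near⟩
  obtain ⟨F, hF, h_card⟩ := atLeastCard_of_forall_exists_abs_im_sub_le hR h_near hT
  refine ⟨F, fun s hs ↦ ?_, h_card⟩
  obtain ⟨⟨h_lower, h_upper, h_zero⟩, h_im⟩ := hF hs
  exact ⟨h_lower, h_upper, h_im, h_zero⟩

lemma isQuadratic_of_modulus_four (χ : DirichletCharacter ℂ 4) : χ.IsQuadratic := fun a ↦ by
  by_cases ha : IsUnit a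
  · have h_sq : ∀ x : ZMod 4, IsUnit x → x ^ 2 = 1 := by decide
    exact .inr (sq_eq_one_iff.mp (by rw [← map_pow, h_sq a ha, map_one]))
  · exact .inl (χ.map_nonunit ha)

/-- Let `χ₋₄` be the (unique) nontrivial Dirichlet character mod 4 and
`L(·, χ₋₄)` its `L`-function. For every `δ > 0` the function
`ζ(s) L(s-2, χ₋₄) - 4 ζ(s-2) L(s, χ₋₄)` has at least `cT` zeros in
`{3 < Re s < 3+δ, Im s ∈ [0,T]}`; in particular the Epstein zeta function
`ζ(s; I₆) = -4 (ζ(s) L(s-2, χ₋₄) - 4 ζ(s-2) L(s, χ₋₄))` has infinitely many zeros in the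
half-plane `Re s > 3`. -/
theorem statement_16 (χ : DirichletCharacter ℂ 4) (hχ : χ ≠ 1) (δ : ℝ) (hδ : 0 < δ) :
    (∃ c : ℝ, 0 < c ∧ ∃ T₀ : ℝ, 0 < T₀ ∧ ∀ T : ℝ, T₀ ≤ T →
      AtLeastCard {s : ℂ | 3 < s.re ∧ s.re < 3 + δ ∧ s.im ∈ Set.Icc 0 T ∧
        riemannZeta s * DirichletCharacter.LFunction χ (s - 2) -
          4 * riemannZeta (s - 2) * DirichletCharacter.LFunction χ s = 0} (c * T)) ∧
    {s : ℂ | 3 < s.re ∧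
      -4 * (riemannZeta s * DirichletCharacter.LFunction χ (s - 2) -
        4 * riemannZeta (s - 2) * DirichletCharacter.LFunction χ s) = 0}.Infinite := by
  have h := statement_16_general (isQuadratic_of_modulus_four χ) hχ (zero_lt_two (α := ℝ))
    (zero_lt_four (α := ℝ)) hδ
  norm_num only [ofReal_ofNat] at h
  exact ⟨h.1, h.2.mono fun s hs ↦ ⟨hs.1, by rw [hs.2.2, mul_zero]⟩⟩
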